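/- Let s = (s_1,…,s_m) be a scoring vector, let λ ∈ [0,1], and consider the mixture model FI^λ in which, with probability λ, the n agents' rankings are independent and uniform over all m! rankings, and with probability 1-λ all n agents share a single uniformly random ranking. Let k = (k_1,…,k_n) be a vector of nonnegative integers summing to m, and c_i = k_1 + … + k_{i-1}. Then the expected utility of agent i under the non-interleaving picking sequence k equals λ · g(k_i, c_i) + (1-λ) · ( s_{c_i+1} + … + s_{c_i+k_i} ), where g(k,t) denotes the average, over all t-element subsets S of {1,…,m}, of the sum of s_r over the k smallest elements r of {1,…,m} \ S. In particular, this expected utility depends only on k_i and c_i. -/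

import Mathlib

/-- The `k` most preferred items of `S` under the ranking `σ` (where `σ r` is the item of
0-based rank `r`, so `σ.symm x` is the rank of item `x`): the items of `S` having fewer
than `k` strictly better items inside `S`. -/
def topk {m : ℕ} (σ : Fin m ≃ Fin m) (S : Finset (Fin m)) (k : ℕ) : Finset (Fin m) :=
  S.filter fun x => (S.filter fun y => σ.symm y < σ.symm x).card < k

/-- Items remaining before the `i`-th agent (0-based) picks, under profile `P` (agent `i`
has ranking `P i`) and pick-count vector `k` (agent `i` picks `k i` items). -/
def remaining {m : ℕ} (P : ℕ → Fin m ≃ Fin m) (k : ℕ → ℕ) : ℕ → Finset (Fin m)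
  | 0 => Finset.univ
  | i + 1 => remaining P k i \ topk (P i) (remaining P k i) (k i)

/-- The set of items greedily picked by the `i`-th agent (0-based). -/
def alloc {m : ℕ} (P : ℕ → Fin m ≃ Fin m) (k : ℕ → ℕ) (i : ℕ) : Finset (Fin m) :=
  topk (P i) (remaining P k i) (k i)

/-- The utility of the `i`-th agent (0-based): the sum of the scores `s r` over the
1-based ranks `r` (in her own ranking) of the items she receives. -/
noncomputable def util {m : ℕ} (s : ℕ → ℝ) (P : ℕ → Fin m ≃ Fin m) (k : ℕ → ℕ)
    (i : ℕ) : ℝ :=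
  ∑ x ∈ alloc P k i, s (((P i).symm x : ℕ) + 1)

/-- The `k` smallest elements of a finite set `A` of naturals: the elements of `A` having
fewer than `k` strictly smaller elements inside `A`. -/
def smallestK (A : Finset ℕ) (k : ℕ) : Finset ℕ :=
  A.filter fun x => (A.filter fun y => y < x).card < k

/-- `g m s j k t` is the average, over all `t`-element subsets `S` of `{j,…,m}`, of the sum
of `s r` over the `k` smallest elements `r` of `{j,…,m} \ S`. -/
noncomputable def g (m : ℕ) (s : ℕ → ℝ) (j k t : ℕ) : ℝ :=
  (∑ S ∈ (Finset.Icc j m).powersetCard t,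
      ∑ r ∈ smallestK (Finset.Icc j m \ S) k, s r) /
    (((Finset.Icc j m).powersetCard t).card : ℝ)

/-- Extend a profile on `Fin n` to a profile indexed by `ℕ` (agents `≥ n` are irrelevant). -/
def extendProfile {m : ℕ} (n : ℕ) (Q : Fin n → Fin m ≃ Fin m) : ℕ → Fin m ≃ Fin m :=
  fun i => if h : i < n then Q ⟨i, h⟩ else Equiv.refl _

/-- Expected utility of the `i`-th agent (0-based) in the full independence model. -/
noncomputable def EUFI (n m : ℕ) (s : ℕ → ℝ) (k : ℕ → ℕ) (i : ℕ) : ℝ :=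
  (∑ Q : Fin n → Fin m ≃ Fin m, util s (extendProfile n Q) k i) /
    (Fintype.card (Fin n → Fin m ≃ Fin m) : ℝ)

/-- Expected utility of the `i`-th agent (0-based) in the full correlation model: all agents
share a single uniformly random ranking. -/
noncomputable def EUFC (m : ℕ) (s : ℕ → ℝ) (k : ℕ → ℕ) (i : ℕ) : ℝ :=
  (∑ σ : Fin m ≃ Fin m, util s (fun _ => σ) k i) / (Fintype.card (Fin m ≃ Fin m) : ℝ)

open Finset

/-- Among the elements of `A`, ordered by their values under an injective `f`, exactly
`min k #A` have fewer than `k` predecessors in `A`. -/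
theorem card_filter_card_lt {α β : Type*} [LinearOrder β] (f : α → β)
    (hf : Function.Injective f) (A : Finset α) (k : ℕ) :
    (A.filter fun x => (A.filter fun y => f y < f x).card < k).card = min k A.card := by
  classical
  have hlt : ∀ x ∈ A, ∀ y, f x < f y →
      (A.filter fun z => f z < f x).card < (A.filter fun z => f z < f y).card := by
    intro x hx y hxy
    apply card_lt_card
    refine ⟨fun z hz => ?_, fun h => ?_⟩
    · simp only [mem_filter] at hz ⊢
      exact ⟨hz.1, hz.2.trans hxy⟩
    · have := h (mem_filter.2 ⟨hx, hxy⟩)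
      simp at this
  have hinj : Set.InjOn (fun x => (A.filter fun y => f y < f x).card) (A : Set α) := by
    intro x hx y hy hxy
    rcases lt_trichotomy (f x) (f y) with h | h | h
    · exact absurd hxy (hlt x hx y h).ne
    · exact hf h
    · exact absurd hxy (hlt y hy x h).ne'
  have himage : A.image (fun x => (A.filter fun y => f y < f x).card) = range A.card := by
    apply eq_of_subset_of_card_le
    · intro r hr
      obtain ⟨x, hx, rfl⟩ := mem_image.1 hr
      refine mem_range.2 (card_lt_card (filter_ssubset.2 ⟨x, hx, lt_irrefl _⟩))
    · rw [card_image_of_injOn hinj, card_range]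
  rw [← card_image_of_injOn (hinj.mono (coe_subset.2 (filter_subset _ A)))]
  have hfilter : (A.filter fun x => (A.filter fun y => f y < f x).card < k).image
      (fun x => (A.filter fun y => f y < f x).card) = range (min k A.card) := by
    rw [← filter_image (p := fun r => r < k), himage]
    ext r
    simp [and_comm]
  rw [hfilter, card_range]

theorem card_topk {m : ℕ} (σ : Fin m ≃ Fin m) (S : Finset (Fin m)) (k : ℕ) :
    (topk σ S k).card = min k S.card :=
  card_filter_card_lt σ.symm σ.symm.injective S k

theorem topk_subset {m : ℕ} (σ : Fin m ≃ Fin m) (S : Finset (Fin m)) (k : ℕ) :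
    topk σ S k ⊆ S :=
  filter_subset _ _

theorem card_remaining {m : ℕ} (P : ℕ → Fin m ≃ Fin m) (k : ℕ → ℕ) (i : ℕ) :
    (remaining P k i).card = m - ∑ j ∈ range i, k j := by
  induction i with
  | zero => simp [remaining]
  | succ i ih =>
    rw [remaining, card_sdiff_of_subset (topk_subset _ _ _), card_topk, ih, sum_range_succ]
    omega

theorem remaining_congr {m : ℕ} {P P' : ℕ → Fin m ≃ Fin m} (k : ℕ → ℕ) (i : ℕ)
    (h : ∀ j < i, P j = P' j) : remaining P k i = remaining P' k i := by
  induction i with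
  | zero => rfl
  | succ i ih =>
    rw [remaining, remaining, ih fun j hj => h j (by omega), h i (by omega)]

/-- The embedding sending a 0-based rank to the corresponding 1-based rank. -/
def rankEmb (m : ℕ) : Fin m ↪ ℕ :=
  ⟨fun x => (x : ℕ) + 1, fun x y h => Fin.ext (by simpa using h)⟩

theorem rankEmb_apply {m : ℕ} (x : Fin m) : rankEmb m x = (x : ℕ) + 1 := rfl

theorem map_rankEmb_univ (m : ℕ) : univ.map (rankEmb m) = Icc 1 m := by
  ext r
  simp only [mem_map, mem_univ, true_and, mem_Icc, rankEmb_apply]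
  constructor
  · rintro ⟨x, rfl⟩
    omega
  · rintro ⟨h1, h2⟩
    exact ⟨⟨r - 1, by omega⟩, by simp only; omega⟩

theorem smallestK_map {m : ℕ} (σ : Fin m ≃ Fin m) (S : Finset (Fin m)) (k : ℕ) :
    smallestK (S.map (σ.symm.toEmbedding.trans (rankEmb m))) k =
      (topk σ S k).map (σ.symm.toEmbedding.trans (rankEmb m)) := by
  simp only [smallestK, topk, filter_map, card_map]
  congr 1
  ext x
  simp [rankEmb_apply]

/-- The sum of the `k` best available scores when the (0-based) ranks in `U` are taken. -/
noncomputable def bestScore (m : ℕ) (s : ℕ → ℝ) (k : ℕ) (U : Finset (Fin m)) : ℝ :=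
  ∑ r ∈ smallestK (Icc 1 m \ U.map (rankEmb m)) k, s r

theorem util_eq_bestScore {m : ℕ} (s : ℕ → ℝ) (P : ℕ → Fin m ≃ Fin m) (k : ℕ → ℕ) (i : ℕ) :
    util s P k i =
      bestScore m s (k i) ((remaining P k i)ᶜ.map (P i).symm.toEmbedding) := by
  have hset : Icc 1 m \ ((remaining P k i)ᶜ.map (P i).symm.toEmbedding).map (rankEmb m) =
      (remaining P k i).map ((P i).symm.toEmbedding.trans (rankEmb m)) := by
    rw [← map_rankEmb_univ, ← map_univ_equiv (P i).symm, map_map, map_map, ← Finset.map_sdiff,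
      sdiff_compl, inf_eq_inter, univ_inter]
  rw [bestScore, hset, smallestK_map, sum_map]
  rfl

theorem g_eq_sum_bestScore (m : ℕ) (s : ℕ → ℝ) (k t : ℕ) :
    g m s 1 k t = (∑ U ∈ powersetCard t (univ : Finset (Fin m)), bestScore m s k U) /
      (m.choose t : ℝ) := by
  rw [g, card_powersetCard, Nat.card_Icc, Nat.add_sub_cancel]
  congr 1
  conv_lhs => rw [← map_rankEmb_univ, powersetCard_map, sum_map]
  simp only [map_rankEmb_univ]
  rfl

/-- Summing `F` over all relabellings of a set only depends on the size of the set. -/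
theorem sum_perm_map_eq_of_card_eq {α : Type*} [Fintype α] [DecidableEq α]
    (F : Finset α → ℝ) {U V : Finset α} (h : U.card = V.card) :
    ∑ σ : Equiv.Perm α, F (U.map σ.toEmbedding) =
      ∑ σ : Equiv.Perm α, F (V.map σ.toEmbedding) := by
  obtain ⟨τ, rfl⟩ : ∃ τ : Equiv.Perm α, V.map τ.toEmbedding = U := by
    let e : {x // x ∈ V} ≃ {x // x ∈ U} := equivOfCardEq h.symm
    refine ⟨e.extendSubtype, eq_of_subset_of_card_le ?_ (by simp [h])⟩
    intro y hy
    obtain ⟨x, hx, rfl⟩ := mem_map.1 hy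
    exact e.extendSubtype_mem x hx
  refine Fintype.sum_equiv (Equiv.mulRight τ) _ _ fun σ => ?_
  rw [map_map]
  rfl

/-- The average of `F` over all relabellings of a `t`-element set is its average over all
`t`-element sets. -/
theorem choose_mul_sum_perm_map {α : Type*} [Fintype α] [DecidableEq α]
    (F : Finset α → ℝ) (U : Finset α) :
    ((Fintype.card α).choose U.card : ℝ) * ∑ σ : Equiv.Perm α, F (U.map σ.toEmbedding) =
      (Fintype.card (Equiv.Perm α) : ℝ) * ∑ T ∈ powersetCard U.card univ, F T := by
  have hperm : ∀ σ : Equiv.Perm α,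
      ∑ V ∈ powersetCard U.card univ, F (V.map σ.toEmbedding) =
        ∑ T ∈ powersetCard U.card univ, F T := by
    intro σ
    conv_rhs => rw [← map_univ_equiv σ, powersetCard_map, sum_map]
    rfl
  calc _ = ∑ V ∈ powersetCard U.card univ, ∑ σ : Equiv.Perm α, F (V.map σ.toEmbedding) := by
        rw [sum_congr rfl fun V hV =>
          sum_perm_map_eq_of_card_eq F (mem_powersetCard.1 hV).2, sum_const,
          card_powersetCard, card_univ, nsmul_eq_mul]
    _ = _ := by
        rw [sum_comm, sum_congr rfl fun σ _ => hperm σ, sum_const, card_univ, nsmul_eq_mul]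

theorem sum_perm_bestScore {m : ℕ} (s : ℕ → ℝ) (k : ℕ) (U : Finset (Fin m)) :
    ∑ σ : Equiv.Perm (Fin m), bestScore m s k (U.map σ.toEmbedding) =
      (Fintype.card (Fin m ≃ Fin m) : ℝ) * g m s 1 k U.card := by
  have hpos : ((m.choose U.card : ℕ) : ℝ) ≠ 0 := by
    exact_mod_cast (Nat.choose_pos (by simpa using card_le_univ U)).ne'
  have h := choose_mul_sum_perm_map (bestScore m s k) U
  rw [Fintype.card_fin] at h
  rw [g_eq_sum_bestScore, mul_div_assoc', eq_div_iff hpos, mul_comm, h]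

theorem EUFI_eq_g (n m : ℕ) (s : ℕ → ℝ) (k : ℕ → ℕ) (i : ℕ) (hi : i < n)
    (hc : ∑ j ∈ range i, k j ≤ m) :
    EUFI n m s k i = g m s 1 (k i) (∑ j ∈ range i, k j) := by
  have hcompl : ∀ P : ℕ → Fin m ≃ Fin m,
      (remaining P k i)ᶜ.card = ∑ j ∈ range i, k j := by
    intro P
    rw [card_compl, card_remaining, Fintype.card_fin]
    omega
  -- Multiplying the ranking of agent `i` by `τ⁻¹` permutes the profiles and keeps `remaining`.
  have hshift : ∀ τ : Equiv.Perm (Fin m),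
      ∑ Q : Fin n → Equiv.Perm (Fin m), util s (extendProfile n Q) k i =
        ∑ Q : Fin n → Equiv.Perm (Fin m), bestScore m s (k i)
          (((remaining (extendProfile n Q) k i)ᶜ.map (Q ⟨i, hi⟩).symm.toEmbedding).map
            τ.toEmbedding) := by
    intro τ
    rw [← Equiv.sum_comp (Equiv.mulRight (Pi.mulSingle (⟨i, hi⟩ : Fin n) τ⁻¹))]
    refine sum_congr rfl fun Q _ => ?_
    have hrem : remaining (extendProfile n (Q * Pi.mulSingle (⟨i, hi⟩ : Fin n) τ⁻¹)) k i =
        remaining (extendProfile n Q) k i := by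
      refine remaining_congr k i fun j hj => ?_
      have hne : (⟨j, hj.trans hi⟩ : Fin n) ≠ ⟨i, hi⟩ := by
        simp only [ne_eq, Fin.mk.injEq]
        omega
      simp [extendProfile, hj.trans hi, Pi.mulSingle_eq_of_ne hne]
    have hrank : extendProfile n (Q * Pi.mulSingle (⟨i, hi⟩ : Fin n) τ⁻¹) i =
        Q ⟨i, hi⟩ * τ⁻¹ := by
      simp [extendProfile, hi]
    rw [Equiv.coe_mulRight, util_eq_bestScore, hrem, hrank, map_map]
    rfl
  have htotal : (Fintype.card (Fin m ≃ Fin m) : ℝ) *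
      ∑ Q : Fin n → Equiv.Perm (Fin m), util s (extendProfile n Q) k i =
      (Fintype.card (Fin m ≃ Fin m) : ℝ) * ((Fintype.card (Fin n → Fin m ≃ Fin m) : ℝ) *
        g m s 1 (k i) (∑ j ∈ range i, k j)) := by
    calc _ = ∑ τ : Equiv.Perm (Fin m),
          ∑ Q : Fin n → Equiv.Perm (Fin m), util s (extendProfile n Q) k i := by
          rw [sum_const, card_univ, nsmul_eq_mul]
      _ = _ := by
          rw [sum_congr rfl fun τ _ => hshift τ, sum_comm]
          simp only [sum_perm_bestScore, card_map, hcompl]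
          rw [sum_const, card_univ, nsmul_eq_mul, mul_left_comm]
  have hpos : (Fintype.card (Fin m ≃ Fin m) : ℝ) ≠ 0 := by
    exact_mod_cast Fintype.card_ne_zero
  have hpos' : (Fintype.card (Fin n → Fin m ≃ Fin m) : ℝ) ≠ 0 := by
    exact_mod_cast Fintype.card_ne_zero
  rw [EUFI, div_eq_iff hpos', mul_comm (g _ _ _ _ _)]
  exact mul_left_cancel₀ hpos htotal

theorem topk_filter_le {m : ℕ} (σ : Fin m ≃ Fin m) (c k : ℕ) :
    topk σ (univ.filter fun x => c ≤ (σ.symm x : ℕ)) k =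
      univ.filter fun x => c ≤ (σ.symm x : ℕ) ∧ (σ.symm x : ℕ) < c + k := by
  have hcard : ∀ x : Fin m, ((univ.filter fun x => c ≤ (σ.symm x : ℕ)).filter
      fun y => σ.symm y < σ.symm x).card = (σ.symm x : ℕ) - c := by
    intro x
    rw [← Nat.card_Ico, ← card_map (σ.symm.toEmbedding.trans Fin.valEmbedding)]
    congr 1
    ext r
    simp only [mem_map, mem_filter, mem_univ, true_and, Function.Embedding.trans_apply,
      Equiv.coe_toEmbedding, Fin.valEmbedding_apply, mem_Ico]
    constructor
    · rintro ⟨y, ⟨h1, h2⟩, rfl⟩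
      exact ⟨h1, h2⟩
    · rintro ⟨h1, h2⟩
      exact ⟨σ ⟨r, h2.trans (σ.symm x).isLt⟩, by simpa [Fin.lt_def] using ⟨h1, h2⟩, by simp⟩
  ext x
  simp only [topk, hcard, mem_filter, mem_univ, true_and]
  omega

theorem remaining_const {m : ℕ} (σ : Fin m ≃ Fin m) (k : ℕ → ℕ) (i : ℕ) :
    remaining (fun _ => σ) k i =
      univ.filter fun x => ∑ j ∈ range i, k j ≤ (σ.symm x : ℕ) := by
  induction i with
  | zero => simp [remaining]
  | succ i ih =>
    rw [remaining, ih, topk_filter_le, sum_range_succ]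
    ext x
    simp only [mem_sdiff, mem_filter, mem_univ, true_and]
    omega

theorem util_const {m : ℕ} (s : ℕ → ℝ) (σ : Fin m ≃ Fin m) (k : ℕ → ℕ) (i : ℕ)
    (hc : ∑ j ∈ range i, k j + k i ≤ m) :
    util s (fun _ => σ) k i =
      ∑ r ∈ Icc (∑ j ∈ range i, k j + 1) (∑ j ∈ range i, k j + k i), s r := by
  have hset : (alloc (fun _ => σ) k i).map (σ.symm.toEmbedding.trans (rankEmb m)) =
      Icc (∑ j ∈ range i, k j + 1) (∑ j ∈ range i, k j + k i) := by
    rw [alloc, remaining_const, topk_filter_le]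
    ext r
    simp only [mem_map, mem_filter, mem_univ, true_and, Function.Embedding.trans_apply,
      Equiv.coe_toEmbedding, rankEmb_apply, mem_Icc]
    constructor
    · rintro ⟨y, ⟨h1, h2⟩, rfl⟩
      omega
    · rintro ⟨h1, h2⟩
      refine ⟨σ ⟨r - 1, by omega⟩, ?_, ?_⟩ <;> simp only [Equiv.symm_apply_apply] <;> omega
  rw [← hset, sum_map]
  rfl

theorem EUFC_eq_sum (m : ℕ) (s : ℕ → ℝ) (k : ℕ → ℕ) (i : ℕ)
    (hc : ∑ j ∈ range i, k j + k i ≤ m) :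
    EUFC m s k i =
      ∑ r ∈ Icc (∑ j ∈ range i, k j + 1) (∑ j ∈ range i, k j + k i), s r := by
  have hpos : (Fintype.card (Fin m ≃ Fin m) : ℝ) ≠ 0 := by
    exact_mod_cast Fintype.card_ne_zero
  rw [EUFC, sum_congr rfl fun σ _ => util_const s σ k i hc, sum_const, card_univ,
    nsmul_eq_mul, mul_div_cancel_left₀ _ hpos]

/-- In the mixture model `FI^λ` (with probability `λ` the profile is drawn from the full
independence model, with probability `1-λ` from the full correlation model), the expected
utility of agent `i` under the non-interleaving picking sequence `k` equals
`λ · g(k_i, c_i) + (1-λ) · (s_{c_i+1} + ⋯ + s_{c_i+k_i})`, where `c_i = k_1 + ⋯ + k_{i-1}`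
and `g m s 1 k t` is the average over all `t`-element subsets `S` of `{1,…,m}` of the sum of
`s r` over the `k` smallest elements of `{1,…,m} \ S`.  In particular it depends only on
`k_i` and `c_i`. -/
theorem mixture_expected_utility
    (n m : ℕ) (hn : 0 < n) (hm : 0 < m) (s : ℕ → ℝ)
    (hmono : ∀ i j : ℕ, 1 ≤ i → i ≤ j → j ≤ m → s j ≤ s i)
    (hnonneg : ∀ j : ℕ, 1 ≤ j → j ≤ m → 0 ≤ s j)
    (lam : ℝ) (hlam0 : 0 ≤ lam) (hlam1 : lam ≤ 1)
    (k : ℕ → ℕ) (hk : ∑ i ∈ Finset.range n, k i = m) :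
    ∀ i < n,
      lam * EUFI n m s k i + (1 - lam) * EUFC m s k i =
        lam * g m s 1 (k i) (∑ j ∈ Finset.range i, k j) +
          (1 - lam) * ∑ j ∈ Finset.Icc ((∑ j ∈ Finset.range i, k j) + 1)
            ((∑ j ∈ Finset.range i, k j) + k i), s j := by
  intro i hi
  have hc : ∑ j ∈ range i, k j + k i ≤ m := by
    rw [← sum_range_succ, ← hk]
    exact sum_le_sum_of_subset (range_mono hi)
  rw [EUFI_eq_g n m s k i hi (by omega), EUFC_eq_sum m s k i hc]
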